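/- Every nonzero 2-dimensional commutative pre-Lie algebra (C, ·, ∘) over ℂ is isomorphic to one of the following algebras, given on a basis e1, e2 (all unlisted products of basis elements, other than those forced by commutativity of ·, are zero): with · ≡ 0: the pre-Lie algebras C01: e1∘e1 = e1 + e2, e2∘e1 = e2; C02: e1∘e1 = e1 + e2, e1∘e2 = e2; C03: e1∘e1 = e2; C04: e2∘e1 = e1; C05^α: e1∘e1 = e1, e1∘e2 = α·e2; C06^α: e1∘e1 = e1, e1∘e2 = α·e2, e2∘e1 = e2; C07: e1∘e1 = e1, e2∘e2 = e2; C08: e1∘e1 = e1, e1∘e2 = 2·e2, e2∘e1 = (1/2)·e1 + e2, e2∘e2 = e2; and (α ∈ ℂ): C09: e1·e1 = e1, e2·e2 = e2, ∘ ≡ 0; C10^α: e1·e1 = e1, e1·e2 = e2, e1∘e2 = α·e2; C11: e1·e1 = e1, e1·e2 = e2, e2∘e2 = e2; C12^α: e1·e1 = e1, e1∘e2 = α·e2; C13: e1·e1 = e1, e2∘e2 = e2; C14: e1·e1 = e2, e1∘e1 = e1, e1∘e2 = 2·e2; C15^α: e1·e1 = e2, e1∘e1 = α·e1, e1∘e2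 = 2α·e2, e2∘e1 = e1 + α·e2, e2∘e2 = 2·e2; C16: e1·e1 = e2, e1∘e1 = e1, e1∘e2 = 2·e2, e2∘e1 = e2; C17^α: e1·e1 = e2, e1∘e1 = α·e2. Moreover, among the algebras C09–C17 the only nontrivial isomorphism is C15^α ≅ C15^{−α}. -/

import Mathlib

noncomputable section

/-- The 2-dimensional complex vector space. -/
abbrev V2 : Type := Fin 2 → ℂ

/-- The bilinear multiplication on `V2` determined by a table of structure constants:
`c i j` is the product of the `i`-th and `j`-th basis vectors. -/
def tm (c : Fin 2 → Fin 2 → V2) : V2 → V2 → V2 :=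
  fun x y => ∑ i, ∑ j, (x i * y j) • c i j

/-- Multiplication table with the given values of `e1*e1`, `e1*e2`, `e2*e1`, `e2*e2`. -/
def tbl (a b c d : V2) : Fin 2 → Fin 2 → V2 := ![![a, b], ![c, d]]

/-- The zero multiplication on `V2`. -/
def zm : V2 → V2 → V2 := fun _ _ => 0

/-- Isomorphism of algebras with one multiplication: a ℂ-linear bijection preserving
the multiplication. -/
def Iso1 {A : Type*} [AddCommGroup A] [Module ℂ A] {B : Type*} [AddCommGroup B]
    [Module ℂ B] (μ : A → A → A) (ν : B → B → B) : Prop :=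
  ∃ φ : A ≃ₗ[ℂ] B, ∀ x y, φ (μ x y) = ν (φ x) (φ y)

/-- Isomorphism of algebras with two multiplications: a ℂ-linear bijection preserving
both multiplications. -/
def Iso2 {A : Type*} [AddCommGroup A] [Module ℂ A] {B : Type*} [AddCommGroup B]
    [Module ℂ B] (μ₁ μ₂ : A → A → A) (ν₁ ν₂ : B → B → B) : Prop :=
  ∃ φ : A ≃ₗ[ℂ] B,
    (∀ x y, φ (μ₁ x y) = ν₁ (φ x) (φ y)) ∧ (∀ x y, φ (μ₂ x y) = ν₂ (φ x) (φ y))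

/-- The commutative associative algebra A01: `e1·e1 = e1`, `e2·e2 = e2`. -/
def cA01 : Fin 2 → Fin 2 → V2 := tbl ![1,0] 0 0 ![0,1]

/-- The commutative associative algebra A02: `e1·e1 = e1`, `e1·e2 = e2·e1 = e2`. -/
def cA02 : Fin 2 → Fin 2 → V2 := tbl ![1,0] ![0,1] ![0,1] 0

/-- The commutative associative algebra A03: `e1·e1 = e1`. -/
def cA03 : Fin 2 → Fin 2 → V2 := tbl ![1,0] 0 0 0

/-- The commutative associative algebra A04: `e1·e1 = e2`. -/
def cA04 : Fin 2 → Fin 2 → V2 := tbl ![0,1] 0 0 0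

/-- Index of the nonzero 2-dimensional pre-Lie algebras C01–C08. -/
inductive PLIdx : Type
  | c01 | c02 | c03 | c04
  | c05 (α : ℂ)
  | c06 (α : ℂ)
  | c07 | c08

/-- The multiplication tables of the nonzero 2-dimensional pre-Lie algebras C01–C08. -/
def plAlg : PLIdx → Fin 2 → Fin 2 → V2
  | .c01 => tbl ![1,1] 0 ![0,1] 0            -- e1∘e1 = e1+e2, e2∘e1 = e2
  | .c02 => tbl ![1,1] ![0,1] 0 0            -- e1∘e1 = e1+e2, e1∘e2 = e2
  | .c03 => tbl ![0,1] 0 0 0                 -- e1∘e1 = e2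
  | .c04 => tbl 0 0 ![1,0] 0                 -- e2∘e1 = e1
  | .c05 α => tbl ![1,0] ![0,α] 0 0          -- e1∘e1 = e1, e1∘e2 = α e2
  | .c06 α => tbl ![1,0] ![0,α] ![0,1] 0     -- e1∘e1 = e1, e1∘e2 = α e2, e2∘e1 = e2
  | .c07 => tbl ![1,0] 0 0 ![0,1]            -- e1∘e1 = e1, e2∘e2 = e2
  | .c08 => tbl ![1,0] ![0,2] ![1/2,1] ![0,1]

/-- Index of the commutative pre-Lie algebras C09–C17 with nontrivial commutative
associative multiplication. -/
inductive CPIdx : Type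
  | c09
  | c10 (α : ℂ)
  | c11
  | c12 (α : ℂ)
  | c13
  | c14
  | c15 (α : ℂ)
  | c16
  | c17 (α : ℂ)

/-- The commutative associative multiplication of C09–C17. -/
def cpMul : CPIdx → Fin 2 → Fin 2 → V2
  | .c09 => cA01
  | .c10 _ => cA02
  | .c11 => cA02
  | .c12 _ => cA03
  | .c13 => cA03
  | .c14 => cA04
  | .c15 _ => cA04
  | .c16 => cA04
  | .c17 _ => cA04

/-- The pre-Lie multiplication of C09–C17. -/
def cpCirc : CPIdx → Fin 2 → Fin 2 → V2
  | .c09 => tbl 0 0 0 0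
  | .c10 α => tbl 0 ![0,α] 0 0               -- e1∘e2 = α e2
  | .c11 => tbl 0 0 0 ![0,1]                 -- e2∘e2 = e2
  | .c12 α => tbl 0 ![0,α] 0 0               -- e1∘e2 = α e2
  | .c13 => tbl 0 0 0 ![0,1]                 -- e2∘e2 = e2
  | .c14 => tbl ![1,0] ![0,2] 0 0            -- e1∘e1 = e1, e1∘e2 = 2e2
  | .c15 α => tbl ![α,0] ![0,2*α] ![1,α] ![0,2]
  | .c16 => tbl ![1,0] ![0,2] ![0,1] 0
  | .c17 α => tbl ![0,α] 0 0 0               -- e1∘e1 = α e2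

/-!
The compatibility of the two multiplications says that every left multiplication `x ∘ ·` is a
derivation of `·`. If `·` is nonzero, it is one of the four algebras A01–A04, and a derivation
kills its idempotents; this leaves at most four structure constants for `∘`, which the pre-Lie
identity and the automorphisms of `·` normalise to C09–C17. Two bases adapted to the same `·`
differ only by a rescaling of `e₂` (A02, A03) or by `e₁ ↦ s (e₁ + τ e₂)`, `e₂ ↦ s² e₂` (A04).
Comparing structure constants in two such bases gives the rigidity statement; the sign in C15 is
that of `s`, which there satisfies `s² = 1`.

If `·` vanishes and `∘` is commutative, then `∘` is associative and again one of A01–A04. Otherwise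
the commutator is a nonzero alternating map on a plane, so there is a basis with
`e₁ ∘ e₂ - e₂ ∘ e₁ = e₂`. In it the pre-Lie identity leaves only two possibilities: either `e₂`
spans a two-sided ideal of square zero, or `e₂ ∘ e₂` is not a multiple of `e₂` and a change of `e₁`
by a multiple of `e₂` determines all other products, which gives C08.
-/

section Pairs

variable {K C : Type*} [Field K] [AddCommGroup C] [Module K C]

theorem exists_eq_smul_add_smul (b : Module.Basis (Fin 2) K C) (x : C) :
    ∃ p q : K, x = p • b 0 + q • b 1 :=
  ⟨b.equivFun x 0, b.equivFun x 1, (b.sum_equivFun x).symm.trans (Fin.sum_univ_two _)⟩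

theorem linearIndependent_basis_pair (b : Module.Basis (Fin 2) K C) :
    LinearIndependent K ![b 0, b 1] := by
  have heta : ![b 0, b 1] = b := FinVec.etaExpand_eq b
  exact heta ▸ b.linearIndependent

theorem exists_basis_of_linearIndependent_pair (hdim : Module.finrank K C = 2) {u v : C}
    (h : LinearIndependent K ![u, v]) :
    ∃ b : Module.Basis (Fin 2) K C, b 0 = u ∧ b 1 = v :=
  ⟨basisOfLinearIndependentOfCardEqFinrank h (by simp [hdim]), by simp, by simp⟩

theorem exists_basis_of_det_ne_zero (b : Module.Basis (Fin 2) K C) {p q r s : K}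
    (hdet : p * s ≠ q * r) :
    ∃ b' : Module.Basis (Fin 2) K C,
      b' 0 = p • b 0 + q • b 1 ∧ b' 1 = r • b 0 + s • b 1 :=
  exists_basis_of_linearIndependent_pair (by simp [Module.finrank_eq_card_basis b])
    ((LinearIndependent.pair_add_smul_add_smul_iff ..).mpr ⟨linearIndependent_basis_pair b, hdet⟩)

theorem exists_basis_shear (b : Module.Basis (Fin 2) K C) {s r : K} (hs : s ≠ 0) (hr : r ≠ 0)
    (τ : K) : ∃ b' : Module.Basis (Fin 2) K C, b' 0 = s • (b 0 + τ • b 1) ∧ b' 1 = r • b 1 := by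
  obtain ⟨b', h₀, h₁⟩ := exists_basis_of_det_ne_zero b (p := s) (q := s * τ) (r := 0) (s := r)
    (by simp [hs, hr])
  exact ⟨b', by rw [h₀]; module, by rw [h₁]; module⟩

/-- On a plane an alternating map is the determinant times a fixed vector, so its nonzero values
are all proportional. -/
theorem exists_basis_apply_eq_snd_of_isAlt {B : C →ₗ[K] C →ₗ[K] C} (hB : B.IsAlt)
    (hdim : Module.finrank K C = 2) (h : ∃ x y, B x y ≠ 0) :
    ∃ b : Module.Basis (Fin 2) K C, B (b 0) (b 1) = b 1 := by
  obtain ⟨x, y, hxy⟩ := h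
  obtain ⟨z, hz⟩ := exists_linearIndependent_pair_of_one_lt_finrank (R := K) (by omega) hxy
  obtain ⟨b, -, hb₁⟩ := exists_basis_of_linearIndependent_pair hdim
    (LinearIndependent.pair_symm_iff.mp hz)
  have hdet : ∃ δ : K, B x y = δ • B (b 0) (b 1) := by
    obtain ⟨p, q, rfl⟩ := exists_eq_smul_add_smul b x
    obtain ⟨r, s, rfl⟩ := exists_eq_smul_add_smul b y
    refine ⟨p * s - q * r, ?_⟩
    simp only [map_add, map_smul, LinearMap.add_apply, LinearMap.smul_apply, hB.self_eq_zero,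
      ← hB.neg (b 0) (b 1)]
    module
  obtain ⟨δ, hδ⟩ := hdet
  have hδ₀ : δ ≠ 0 := by
    rintro rfl
    exact hxy (by rw [hδ, zero_smul])
  obtain ⟨b', h₀, h₁⟩ := exists_basis_shear b hδ₀ one_ne_zero 0
  refine ⟨b', ?_⟩
  simp only [h₀, h₁, zero_smul, add_zero, one_smul, map_smul, LinearMap.smul_apply]
  rw [← hδ, hb₁]

end Pairs

section Algebras

variable {K C : Type*} [Field K] [AddCommGroup C] [Module K C]

/-- A commutative associative multiplication, given as a bilinear map. -/
structure IsCommAssoc (m : C →ₗ[K] C →ₗ[K] C) : Prop where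
  comm (x y : C) : m x y = m y x
  assoc (x y z : C) : m (m x y) z = m x (m y z)

/-- A left pre-Lie multiplication, given as a bilinear map. The defining identity says that the
commutator acts through `m` as the commutator of left multiplications. -/
def IsPreLie (m : C →ₗ[K] C →ₗ[K] C) : Prop :=
  ∀ x y z, m (m x y) z - m (m y x) z = m x (m y z) - m y (m x z)

/-- The linear map `D` is a derivation of the (not necessarily associative) multiplication `m`. -/
def IsDerivation (m : C →ₗ[K] C →ₗ[K] C) (D : C →ₗ[K] C) : Prop :=
  ∀ x y, D (m x y) = m (D x) y + m x (D y)

variable {m : C →ₗ[K] C →ₗ[K] C}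

theorem IsPreLie.isCommAssoc (h : IsPreLie m) (hcomm : ∀ x y, m x y = m y x) :
    IsCommAssoc m where
  comm := hcomm
  assoc x y z := by
    have hswap : m x (m z y) = m z (m x y) := by
      simpa only [hcomm x z, sub_self, eq_comm (a := (0 : C)), sub_eq_zero] using h x z y
    rw [hcomm (m x y), ← hswap, hcomm z]

theorem IsDerivation.apply_eq_zero_of_idempotent {D : C →ₗ[K] C} (hD : IsDerivation m D)
    (hm : IsCommAssoc m) {e : C} (he : m e e = e) : D e = 0 := by
  have hDe : D e = m e (D e) + m e (D e) := by
    conv_lhs => rw [← he, hD, hm.comm (D e)]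
  have heDe : m e (D e) = 0 := by
    have h := congrArg (m e) hDe
    rw [map_add, ← hm.assoc, he] at h
    exact left_eq_add.mp h
  rw [hDe, heDe, add_zero]

theorem exists_mul_self_ne_zero [NeZero (2 : K)] (hcomm : ∀ x y, m x y = m y x)
    (h : ∃ x y, m x y ≠ 0) : ∃ x, m x x ≠ 0 := by
  by_contra! halt
  obtain ⟨x, y, hxy⟩ := h
  have hneg : -m x y = m x y := (LinearMap.IsAlt.neg halt x y).trans (hcomm y x)
  have htwo : (2 : K) • m x y = 0 := by rw [two_smul]; nth_rw 1 [← hneg]; exact neg_add_cancel _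
  exact hxy ((smul_eq_zero_iff_right two_ne_zero).mp htwo)

theorem exists_idempotent_of_mul_self_eq_smul {y : C} {r : K} (hy : y ≠ 0) (hr : r ≠ 0)
    (h : m y y = r • y) : ∃ e ≠ 0, m e e = e :=
  ⟨r⁻¹ • y, smul_ne_zero (inv_ne_zero hr) hy, by simp [h, hr]⟩

theorem mul_idempotent_eq_self_or_exists_annihilated (hm : IsCommAssoc m) {e : C}
    (he : m e e = e) : (∀ x, m e x = x) ∨ ∃ y ≠ 0, m e y = 0 := by
  by_cases h : ∀ x, m e x = x
  · exact .inl h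
  · push Not at h
    obtain ⟨x, hx⟩ := h
    exact .inr ⟨x - m e x, sub_ne_zero.mpr hx.symm, by rw [map_sub, ← hm.assoc, he, sub_self]⟩

end Algebras

section Tables

variable {C : Type*} [AddCommGroup C] [Module ℂ C]

/-- The bilinear multiplication `m` has the structure constants `c` in the basis `b`. -/
def HasTable (m : C →ₗ[ℂ] C →ₗ[ℂ] C) (b : Module.Basis (Fin 2) ℂ C)
    (c : Fin 2 → Fin 2 → V2) : Prop :=
  ∀ i j, m (b i) (b j) = ∑ k, c i j k • b k

variable {m m₁ m₂ : C →ₗ[ℂ] C →ₗ[ℂ] C} {b : Module.Basis (Fin 2) ℂ C}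
  {c c' d d' : Fin 2 → Fin 2 → V2}

theorem HasTable.unique (h : HasTable m b c) (h' : HasTable m b c') : c = c' := by
  funext i j
  apply b.equivFun.symm.injective
  rw [b.equivFun_symm_apply, b.equivFun_symm_apply, ← h, ← h']

theorem hasTable_tbl_iff {x y z w : V2} :
    HasTable m b (tbl x y z w) ↔
      (m (b 0) (b 0) = x 0 • b 0 + x 1 • b 1 ∧ m (b 0) (b 1) = y 0 • b 0 + y 1 • b 1) ∧
      (m (b 1) (b 0) = z 0 • b 0 + z 1 • b 1 ∧ m (b 1) (b 1) = w 0 • b 0 + w 1 • b 1) := by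
  simp [HasTable, tbl, Fin.forall_fin_two, Fin.sum_univ_two]

/-- The multiplication `tm c` as a bilinear map. -/
def tmBilin (c : Fin 2 → Fin 2 → V2) : V2 →ₗ[ℂ] V2 →ₗ[ℂ] V2 :=
  Matrix.toLinearMap₂' ℂ (Matrix.of c)

theorem tmBilin_apply (c : Fin 2 → Fin 2 → V2) (x y : V2) : tmBilin c x y = tm c x y := by
  simp only [tmBilin, tm, Matrix.toLinearMap₂'_apply, Matrix.of_apply, smul_smul]

theorem tm_equivFun_basis (b : Module.Basis (Fin 2) ℂ C) (c : Fin 2 → Fin 2 → V2) (i j : Fin 2) :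
    tm c (b.equivFun (b i)) (b.equivFun (b j)) = c i j := by
  fin_cases i <;> fin_cases j <;> simp [tm]

theorem hasTable_iff_equivFun_apply :
    HasTable m b c ↔ ∀ x y, b.equivFun (m x y) = tm c (b.equivFun x) (b.equivFun y) := by
  have hbasis : HasTable m b c ↔ ∀ i j, b.equivFun (m (b i) (b j)) = c i j := by
    simp only [HasTable, ← b.equivFun_symm_apply, ← LinearEquiv.eq_symm_apply]
  rw [hbasis]
  constructor
  · intro h x y
    have hext : m.compr₂ b.equivFun.toLinearMap =
        (tmBilin c).compl₁₂ b.equivFun.toLinearMap b.equivFun.toLinearMap := by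
      refine LinearMap.ext_basis b b fun i j => ?_
      rw [LinearMap.compr₂_apply, LinearMap.compl₁₂_apply, tmBilin_apply]
      exact (h i j).trans (tm_equivFun_basis b c i j).symm
    rw [← tmBilin_apply]
    exact LinearMap.congr_fun₂ hext x y
  · intro h i j
    rw [h, tm_equivFun_basis]

theorem iso2_iff_exists_hasTable :
    Iso2 (fun x y => m₁ x y) (fun x y => m₂ x y) (tm c) (tm d) ↔
      ∃ b, HasTable m₁ b c ∧ HasTable m₂ b d := by
  simp only [hasTable_iff_equivFun_apply]
  refine ⟨fun ⟨φ, h₁, h₂⟩ => ⟨.ofEquivFun φ, ?_⟩, fun ⟨b, h₁, h₂⟩ => ⟨b.equivFun, h₁, h₂⟩⟩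
  rw [Module.Basis.equivFun_ofEquivFun]
  exact ⟨h₁, h₂⟩

theorem iso2_zm_of_hasTable (hm₁ : ∀ x y, m₁ x y = 0) (h : HasTable m₂ b d) :
    Iso2 (fun x y => m₁ x y) (fun x y => m₂ x y) zm (tm d) :=
  ⟨b.equivFun, fun x y => by simp [hm₁, zm], hasTable_iff_equivFun_apply.mp h⟩

theorem hasTable_tmBilin (c : Fin 2 → Fin 2 → V2) :
    HasTable (tmBilin c) (Pi.basisFun ℂ (Fin 2)) c := by
  simp [hasTable_iff_equivFun_apply, tmBilin_apply]

theorem iso2_tm_iff_exists_hasTable :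
    Iso2 (tm c) (tm d) (tm c') (tm d') ↔
      ∃ b, HasTable (tmBilin c) b c' ∧ HasTable (tmBilin d) b d' := by
  simp only [← iso2_iff_exists_hasTable, tmBilin_apply]

end Tables

section CommAssoc

variable {C : Type*} [AddCommGroup C] [Module ℂ C] {m : C →ₗ[ℂ] C →ₗ[ℂ] C}
  {b : Module.Basis (Fin 2) ℂ C}

/-- Index of the four nonzero 2-dimensional commutative associative algebras A01–A04. -/
inductive CAIdx : Type
  | a01 | a02 | a03 | a04

/-- The multiplication tables of A01–A04. -/
def caAlg : CAIdx → Fin 2 → Fin 2 → V2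
  | .a01 => cA01
  | .a02 => cA02
  | .a03 => cA03
  | .a04 => cA04

theorem hasTable_a01_iff : HasTable m b (caAlg .a01) ↔
    (m (b 0) (b 0) = b 0 ∧ m (b 0) (b 1) = 0) ∧ (m (b 1) (b 0) = 0 ∧ m (b 1) (b 1) = b 1) := by
  simp [caAlg, cA01, hasTable_tbl_iff]

theorem hasTable_a02_iff : HasTable m b (caAlg .a02) ↔
    (m (b 0) (b 0) = b 0 ∧ m (b 0) (b 1) = b 1) ∧
      (m (b 1) (b 0) = b 1 ∧ m (b 1) (b 1) = 0) := by
  simp [caAlg, cA02, hasTable_tbl_iff]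

theorem hasTable_a03_iff : HasTable m b (caAlg .a03) ↔
    (m (b 0) (b 0) = b 0 ∧ m (b 0) (b 1) = 0) ∧ (m (b 1) (b 0) = 0 ∧ m (b 1) (b 1) = 0) := by
  simp [caAlg, cA03, hasTable_tbl_iff]

theorem hasTable_a04_iff : HasTable m b (caAlg .a04) ↔
    (m (b 0) (b 0) = b 1 ∧ m (b 0) (b 1) = 0) ∧ (m (b 1) (b 0) = 0 ∧ m (b 1) (b 1) = 0) := by
  simp [caAlg, cA04, hasTable_tbl_iff]

theorem exists_hasTable_of_annihilated (hdim : Module.finrank ℂ C = 2) (hm : IsCommAssoc m)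
    {e y : C} (he : m e e = e) (he₀ : e ≠ 0) (hy₀ : y ≠ 0) (hey : m e y = 0) :
    ∃ b k, HasTable m b (caAlg k) := by
  have hind : LinearIndependent ℂ ![e, y] := by
    refine (LinearIndependent.pair_iff' he₀).mpr fun a ha => hy₀ ?_
    rw [← ha] at hey
    rw [← ha, ← hey, map_smul, he]
  obtain ⟨b, rfl, rfl⟩ := exists_basis_of_linearIndependent_pair hdim hind
  obtain ⟨p, δ, hyy⟩ := exists_eq_smul_add_smul b (m (b 1) (b 1))
  have hp : p = 0 := by
    have h := hm.assoc (b 0) (b 1) (b 1)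
    rw [hey, hyy, map_add, map_smul, map_smul, he, hey] at h
    simpa [he₀] using h.symm
  have hye := (hm.comm (b 1) (b 0)).trans hey
  rcases eq_or_ne δ 0 with rfl | hδ
  · exact ⟨b, .a03, hasTable_a03_iff.mpr ⟨⟨he, hey⟩, hye, by simp [hyy, hp]⟩⟩
  · obtain ⟨b', h₀, h₁⟩ := exists_basis_shear b one_ne_zero (inv_ne_zero hδ) 0
    refine ⟨b', .a01, hasTable_a01_iff.mpr ?_⟩
    simp [h₀, h₁, he, hey, hye, hyy, hp, hδ]

theorem exists_basis_mul_self_eq_smul_of_unital (hdim : Module.finrank ℂ C = 2) {e : C}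
    (he₀ : e ≠ 0) (hel : ∀ x, m e x = x) (her : ∀ x, m x e = x) :
    ∃ (b : Module.Basis (Fin 2) ℂ C) (s : ℂ), b 0 = e ∧ m (b 1) (b 1) = (s * s) • e := by
  obtain ⟨y, hind⟩ := exists_linearIndependent_pair_of_one_lt_finrank (R := ℂ) (by omega) he₀
  obtain ⟨b, rfl, rfl⟩ := exists_basis_of_linearIndependent_pair hdim hind
  obtain ⟨γ, δ, hsq⟩ := exists_eq_smul_add_smul b (m (b 1) (b 1))
  obtain ⟨s, hs⟩ := IsAlgClosed.exists_eq_mul_self (γ + δ ^ 2 / 4)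
  obtain ⟨b', h₀, h₁⟩ := exists_basis_of_det_ne_zero b (p := 1) (q := 0) (r := -(δ / 2)) (s := 1)
    (by simp)
  refine ⟨b', s, by simp [h₀], ?_⟩
  simp only [h₁, map_add, map_smul, LinearMap.add_apply, LinearMap.smul_apply, hel, her, hsq, ← hs]
  module

theorem exists_hasTable_of_unital (hdim : Module.finrank ℂ C = 2) (hm : IsCommAssoc m) {e : C}
    (he₀ : e ≠ 0) (hel : ∀ x, m e x = x) : ∃ b k, HasTable m b (caAlg k) := by
  have her (x : C) : m x e = x := (hm.comm x e).trans (hel x)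
  obtain ⟨b, s, rfl, hsq⟩ := exists_basis_mul_self_eq_smul_of_unital hdim he₀ hel her
  rcases eq_or_ne s 0 with rfl | hs
  · exact ⟨b, .a02, hasTable_a02_iff.mpr ⟨⟨hel _, hel _⟩, her _, by simp [hsq]⟩⟩
  · -- The two primitive idempotents are `(e ± b 1 / s) / 2`.
    obtain ⟨b', h₀, h₁⟩ := exists_basis_of_det_ne_zero b (p := 1 / 2) (q := 1 / (2 * s))
      (r := 1 / 2) (s := -(1 / (2 * s))) (by simp [mul_comm, neg_eq_self, hs])
    refine ⟨b', .a01, hasTable_a01_iff.mpr ⟨⟨?_, ?_⟩, ?_, ?_⟩⟩ <;>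
      simp only [h₀, h₁, map_add, map_smul, LinearMap.add_apply, LinearMap.smul_apply, hel, her,
        hsq] <;>
      match_scalars <;> field

theorem exists_idempotent_or_hasTable_a04 (hdim : Module.finrank ℂ C = 2) (hm : IsCommAssoc m)
    (hne : ∃ x y, m x y ≠ 0) :
    (∃ e ≠ 0, m e e = e) ∨ ∃ b, HasTable m b (caAlg .a04) := by
  obtain ⟨x, hxx⟩ := exists_mul_self_ne_zero hm.comm hne
  have hx : x ≠ 0 := by
    rintro rfl
    exact hxx (map_zero _)
  by_cases hind : LinearIndependent ℂ ![x, m x x]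
  · obtain ⟨b, rfl, hb₁⟩ := exists_basis_of_linearIndependent_pair hdim hind
    obtain ⟨β, γ, h₀₁⟩ := exists_eq_smul_add_smul b (m (b 0) (b 1))
    have h₁₀ := (hm.comm (b 1) (b 0)).trans h₀₁
    have h₁₁ : m (b 1) (b 1) = (β * γ) • b 0 + (β + γ ^ 2) • b 1 := by
      nth_rw 1 [hb₁]
      rw [hm.assoc, h₀₁, map_add, map_smul, map_smul, ← hb₁, h₀₁]
      module
    rcases ne_or_eq β 0 with hβ | rfl
    · refine .inl (exists_idempotent_of_mul_self_eq_smul (y := b 1 - γ • b 0) (r := β) ?_ hβ ?_)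
      · intro h
        exact one_ne_zero (((linearIndependent_basis_pair b).eq_zero_of_pair
          (s := -γ) (t := 1) (by rw [← h]; module)).2)
      · simp only [map_sub, map_smul, LinearMap.sub_apply, LinearMap.smul_apply, h₀₁, h₁₀, h₁₁,
          ← hb₁]
        module
    · rcases ne_or_eq γ 0 with hγ | rfl
      · exact .inl (exists_idempotent_of_mul_self_eq_smul (b.ne_zero 1) (pow_ne_zero 2 hγ)
          (by simpa using h₁₁))
      · refine .inr ⟨b, hasTable_a04_iff.mpr ⟨⟨hb₁.symm, ?_⟩, ?_, ?_⟩⟩ <;> simp [h₀₁, h₁₀, h₁₁]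
  · obtain ⟨a, ha⟩ : ∃ a : ℂ, a • x = m x x := by
      simpa [LinearIndependent.pair_iff' hx] using hind
    refine .inl (exists_idempotent_of_mul_self_eq_smul hx ?_ ha.symm)
    rintro rfl
    exact hxx (by rw [← ha, zero_smul])

theorem IsCommAssoc.exists_hasTable (hdim : Module.finrank ℂ C = 2) (hm : IsCommAssoc m)
    (hne : ∃ x y, m x y ≠ 0) : ∃ b k, HasTable m b (caAlg k) := by
  obtain ⟨e, he₀, he⟩ | ⟨b, hb⟩ := exists_idempotent_or_hasTable_a04 hdim hm hne
  · obtain hunit | ⟨y, hy₀, hey⟩ := mul_idempotent_eq_self_or_exists_annihilated hm he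
    · exact exists_hasTable_of_unital hdim hm he₀ hunit
    · exact exists_hasTable_of_annihilated hdim hm he he₀ hy₀ hey
  · exact ⟨b, .a04, hb⟩

end CommAssoc

section CommPreLie

variable {C : Type*} [AddCommGroup C] [Module ℂ C] {mul circ : C →ₗ[ℂ] C →ₗ[ℂ] C}
  {D : C →ₗ[ℂ] C} {b b' : Module.Basis (Fin 2) ℂ C} {s τ ε : ℂ}

/-- The commutative multiplications with an idempotent `e₁` acting on `e₂` as the scalar `ε` (the
Peirce decomposition with respect to `e₁`) and `e₂·e₂ = 0`: this is A02 for `ε = 1` and A03 for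
`ε = 0`. -/
def peirceTable (ε : ℂ) : Fin 2 → Fin 2 → V2 := tbl ![1, 0] ![0, ε] ![0, ε] 0

theorem caAlg_a02 : caAlg .a02 = peirceTable 1 := rfl

theorem caAlg_a03 : caAlg .a03 = peirceTable 0 := by
  simp [caAlg, cA03, peirceTable, ← Matrix.zero_empty]

theorem hasTable_peirceTable_iff : HasTable mul b (peirceTable ε) ↔
    (mul (b 0) (b 0) = b 0 ∧ mul (b 0) (b 1) = ε • b 1) ∧
      (mul (b 1) (b 0) = ε • b 1 ∧ mul (b 1) (b 1) = 0) := by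
  simp [peirceTable, hasTable_tbl_iff]

theorem HasTable.peirceTable_rescale (h : HasTable mul b (peirceTable ε)) (h₀ : b' 0 = b 0)
    (h₁ : b' 1 = s • b 1) : HasTable mul b' (peirceTable ε) := by
  rw [hasTable_peirceTable_iff] at h ⊢
  simp [h₀, h₁, h, smul_comm s]

theorem IsDerivation.eq_zero_of_a01 (hD : IsDerivation mul D) (hm : IsCommAssoc mul)
    (h : HasTable mul b (caAlg .a01)) : D = 0 := by
  obtain ⟨⟨h₀₀, -⟩, -, h₁₁⟩ := hasTable_a01_iff.mp h
  refine b.ext fun i => ?_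
  fin_cases i
  · exact hD.apply_eq_zero_of_idempotent hm h₀₀
  · exact hD.apply_eq_zero_of_idempotent hm h₁₁

theorem IsDerivation.apply_of_peirceTable (hD : IsDerivation mul D) (hm : IsCommAssoc mul)
    (h : HasTable mul b (peirceTable ε)) : D (b 0) = 0 ∧ ∃ α : ℂ, D (b 1) = α • b 1 := by
  obtain ⟨⟨h₀₀, h₀₁⟩, h₁₀, h₁₁⟩ := hasTable_peirceTable_iff.mp h
  have hD₀ := hD.apply_eq_zero_of_idempotent hm h₀₀
  obtain ⟨p, q, hD₁⟩ := exists_eq_smul_add_smul b (D (b 1))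
  have h₀₁' : p = ε * p := by
    have hD₀₁ := hD (b 0) (b 1)
    rw [h₀₁, map_smul, hD₀, map_zero, LinearMap.zero_apply, hD₁, map_add, map_smul, map_smul,
      h₀₀, h₀₁] at hD₀₁
    refine ((linearIndependent_basis_pair b).eq_of_pair (t := ε * q) (t' := ε * q) ?_).1.symm
    rw [← sub_eq_zero] at hD₀₁ ⊢
    rw [← hD₀₁]
    module
  have h₁₁' : ε * p = 0 := by
    have hD₁₁ := hD (b 1) (b 1)
    simp only [h₁₁, hD₁, map_zero, map_add, map_smul, LinearMap.add_apply, LinearMap.smul_apply,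
      h₀₁, h₁₀, smul_zero, add_zero, ← two_smul ℂ, smul_smul] at hD₁₁
    simpa [b.ne_zero, mul_comm] using hD₁₁.symm
  exact ⟨hD₀, q, by rw [hD₁, h₀₁', h₁₁', zero_smul, zero_add]⟩

theorem IsDerivation.apply_of_a04 (hD : IsDerivation mul D) (h : HasTable mul b (caAlg .a04)) :
    ∃ p q : ℂ, D (b 0) = p • b 0 + q • b 1 ∧ D (b 1) = (2 * p) • b 1 := by
  obtain ⟨⟨h₀₀, h₀₁⟩, h₁₀, -⟩ := hasTable_a04_iff.mp h
  obtain ⟨p, q, hp⟩ := exists_eq_smul_add_smul b (D (b 0))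
  refine ⟨p, q, hp, ?_⟩
  have := hD (b 0) (b 0)
  simp only [h₀₀, hp, map_add, map_smul, LinearMap.add_apply, LinearMap.smul_apply, h₀₁,
    h₁₀] at this
  rw [this]
  module

/-- The multiplications with `x ∘ e₁ = 0` and `e₂` a common eigenvector of all left
multiplications: `e₁∘e₂ = α e₂`, `e₂∘e₂ = β e₂`. These are the families of derivations of A02 and
of A03. -/
def weightTable (α β : ℂ) : Fin 2 → Fin 2 → V2 := tbl 0 ![0, α] 0 ![0, β]

theorem hasTable_weightTable_iff {α β : ℂ} : HasTable circ b (weightTable α β) ↔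
    (circ (b 0) (b 0) = 0 ∧ circ (b 0) (b 1) = α • b 1) ∧
      (circ (b 1) (b 0) = 0 ∧ circ (b 1) (b 1) = β • b 1) := by
  simp [weightTable, hasTable_tbl_iff]

theorem HasTable.weightTable_rescale {α β : ℂ} (h : HasTable circ b (weightTable α β))
    (h₀ : b' 0 = b 0) (h₁ : b' 1 = s • b 1) : HasTable circ b' (weightTable α (s * β)) := by
  rw [hasTable_weightTable_iff] at h ⊢
  obtain ⟨⟨h₀₀, h₀₁⟩, h₁₀, h₁₁⟩ := h
  simp [h₀, h₁, h₀₀, h₀₁, h₁₀, h₁₁, smul_smul, mul_comm]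

theorem weightTable_inj {α β α' β' : ℂ} :
    weightTable α β = weightTable α' β' ↔ α = α' ∧ β = β' := by
  simp [weightTable, tbl]

/-- The multiplications all of whose left multiplications are derivations of A04. -/
def a04Table (a a' c c' : ℂ) : Fin 2 → Fin 2 → V2 :=
  tbl ![a, a'] ![0, 2 * a] ![c, c'] ![0, 2 * c]

theorem hasTable_a04Table_iff {a a' c c' : ℂ} : HasTable circ b (a04Table a a' c c') ↔
    (circ (b 0) (b 0) = a • b 0 + a' • b 1 ∧ circ (b 0) (b 1) = (2 * a) • b 1) ∧
      (circ (b 1) (b 0) = c • b 0 + c' • b 1 ∧ circ (b 1) (b 1) = (2 * c) • b 1) := by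
  simp [a04Table, hasTable_tbl_iff]

theorem a04Table_inj {a a' c c' d d' e e' : ℂ} :
    a04Table a a' c c' = a04Table d d' e e' ↔ (a = d ∧ a' = d') ∧ c = e ∧ c' = e' := by
  refine ⟨fun h => ?_, ?_⟩
  · have h₀ := congrFun₂ h 0 0
    have h₁ := congrFun₂ h 1 0
    exact ⟨⟨congrFun h₀ 0, congrFun h₀ 1⟩, congrFun h₁ 0, congrFun h₁ 1⟩
  · rintro ⟨⟨rfl, rfl⟩, rfl, rfl⟩
    rfl

theorem HasTable.a04Table_shear {a a' c c' : ℂ} (h : HasTable circ b (a04Table a a' c c'))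
    (h₀ : b' 0 = s • (b 0 + τ • b 1)) (h₁ : b' 1 = s ^ 2 • b 1) :
    HasTable circ b' (a04Table (s * (a + τ * c)) (a' + τ * (a + c') + τ ^ 2 * c) (s ^ 2 * c)
      (s * (c' + τ * c))) := by
  rw [hasTable_a04Table_iff] at h ⊢
  obtain ⟨⟨h₀₀, h₀₁⟩, h₁₀, h₁₁⟩ := h
  simp only [h₀, h₁, map_add, map_smul, LinearMap.add_apply, LinearMap.smul_apply,
    h₀₀, h₀₁, h₁₀, h₁₁]
  refine ⟨⟨?_, ?_⟩, ?_, ?_⟩ <;> module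

theorem HasTable.a04_shear (h : HasTable mul b (caAlg .a04))
    (h₀ : b' 0 = s • (b 0 + τ • b 1)) (h₁ : b' 1 = s ^ 2 • b 1) :
    HasTable mul b' (caAlg .a04) := by
  rw [hasTable_a04_iff] at h ⊢
  obtain ⟨⟨h₀₀, h₀₁⟩, h₁₀, h₁₁⟩ := h
  simp [h₀, h₁, h₀₀, h₀₁, h₁₀, h₁₁, smul_smul, pow_two]

theorem IsPreLie.weightTable_mul_eq_zero {α β : ℂ} (hc : IsPreLie circ)
    (h : HasTable circ b (weightTable α β)) : α * β = 0 := by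
  obtain ⟨⟨h₀₀, h₀₁⟩, h₁₀, h₁₁⟩ := hasTable_weightTable_iff.mp h
  have := hc (b 0) (b 1) (b 1)
  simpa [h₀₀, h₀₁, h₁₀, h₁₁, smul_smul, mul_comm, b.ne_zero] using this

theorem IsPreLie.a04Table_mul_eq_zero {a a' c c' : ℂ} (hc : IsPreLie circ)
    (h : HasTable circ b (a04Table a a' c c')) : c * (a - c') = 0 ∧ c' * (a - c') = 0 := by
  obtain ⟨⟨h₀₀, h₀₁⟩, h₁₀, h₁₁⟩ := hasTable_a04Table_iff.mp h
  have hpre := hc (b 0) (b 1) (b 0)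
  simp only [map_add, map_smul, LinearMap.add_apply, LinearMap.smul_apply,
    h₀₀, h₀₁, h₁₀, h₁₁] at hpre
  have hcoef : (c * (a - c')) • b 0 + (c' * (a - c')) • b 1 = 0 := by
    rw [← sub_eq_zero] at hpre
    rw [← hpre]
    module
  exact (linearIndependent_basis_pair b).eq_zero_of_pair hcoef

end CommPreLie

section Classification

variable {C : Type*} [AddCommGroup C] [Module ℂ C] {mul circ : C →ₗ[ℂ] C →ₗ[ℂ] C}
  {b : Module.Basis (Fin 2) ℂ C} {ε : ℂ}

/-- The isomorphism class of the commutative associative algebra underlying `C09`–`C17`. -/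
def CPIdx.ca : CPIdx → CAIdx
  | .c09 => .a01
  | .c10 _ | .c11 => .a02
  | .c12 _ | .c13 => .a03
  | .c14 | .c15 _ | .c16 | .c17 _ => .a04

theorem cpMul_eq_caAlg (i : CPIdx) : cpMul i = caAlg i.ca := by
  cases i <;> rfl

theorem cpCirc_c10 (α : ℂ) : cpCirc (.c10 α) = weightTable α 0 := by
  simp [cpCirc, weightTable, ← Matrix.zero_empty]

theorem cpCirc_c11 : cpCirc .c11 = weightTable 0 1 := by
  simp [cpCirc, weightTable, ← Matrix.zero_empty]

theorem cpCirc_c12 (α : ℂ) : cpCirc (.c12 α) = weightTable α 0 := by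
  simp [cpCirc, weightTable, ← Matrix.zero_empty]

theorem cpCirc_c13 : cpCirc .c13 = weightTable 0 1 := by
  simp [cpCirc, weightTable, ← Matrix.zero_empty]

theorem cpCirc_c14 : cpCirc .c14 = a04Table 1 0 0 0 := by
  simp [cpCirc, a04Table, ← Matrix.zero_empty]

theorem cpCirc_c15 (α : ℂ) : cpCirc (.c15 α) = a04Table α 0 1 α := by
  simp [cpCirc, a04Table, ← Matrix.zero_empty]

theorem cpCirc_c16 : cpCirc .c16 = a04Table 1 0 0 1 := by
  simp [cpCirc, a04Table, ← Matrix.zero_empty]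

theorem cpCirc_c17 (α : ℂ) : cpCirc (.c17 α) = a04Table 0 α 0 0 := by
  simp [cpCirc, a04Table, ← Matrix.zero_empty]

theorem exists_hasTable_weightTable (hm : IsCommAssoc mul)
    (hder : ∀ x, IsDerivation mul (circ x)) (h : HasTable mul b (peirceTable ε)) :
    ∃ α β, HasTable circ b (weightTable α β) := by
  obtain ⟨h₀₀, α, h₀₁⟩ := (hder (b 0)).apply_of_peirceTable hm h
  obtain ⟨h₁₀, β, h₁₁⟩ := (hder (b 1)).apply_of_peirceTable hm h
  exact ⟨α, β, hasTable_weightTable_iff.mpr ⟨⟨h₀₀, h₀₁⟩, h₁₀, h₁₁⟩⟩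

theorem exists_hasTable_a04Table (hder : ∀ x, IsDerivation mul (circ x))
    (h : HasTable mul b (caAlg .a04)) : ∃ a a' c c', HasTable circ b (a04Table a a' c c') := by
  obtain ⟨a, a', h₀₀, h₀₁⟩ := (hder (b 0)).apply_of_a04 h
  obtain ⟨c, c', h₁₀, h₁₁⟩ := (hder (b 1)).apply_of_a04 h
  exact ⟨a, a', c, c', hasTable_a04Table_iff.mpr ⟨⟨h₀₀, h₀₁⟩, h₁₀, h₁₁⟩⟩

theorem exists_hasTable_peirceTable_weightTable (hm : IsCommAssoc mul) (hc : IsPreLie circ)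
    (hder : ∀ x, IsDerivation mul (circ x)) (h : HasTable mul b (peirceTable ε)) :
    ∃ b', HasTable mul b' (peirceTable ε) ∧
      ((∃ α, HasTable circ b' (weightTable α 0)) ∨ HasTable circ b' (weightTable 0 1)) := by
  obtain ⟨α, β, hαβ⟩ := exists_hasTable_weightTable hm hder h
  rcases eq_or_ne β 0 with rfl | hβ
  · exact ⟨b, h, .inl ⟨α, hαβ⟩⟩
  · obtain rfl := (mul_eq_zero_iff_right hβ).mp (hc.weightTable_mul_eq_zero hαβ)
    obtain ⟨b', h₀, h₁⟩ := exists_basis_shear b one_ne_zero (inv_ne_zero hβ) 0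
    have h₀' : b' 0 = b 0 := by simp [h₀]
    refine ⟨b', h.peirceTable_rescale h₀' h₁, .inr ?_⟩
    simpa [hβ] using hαβ.weightTable_rescale h₀' h₁

theorem exists_shear_a04Table (hc : IsPreLie circ) {a a' c c' : ℂ}
    (h : HasTable circ b (a04Table a a' c c')) :
    ∃ s ≠ 0, ∃ τ : ℂ, ∃ i, CPIdx.ca i = .a04 ∧
      a04Table (s * (a + τ * c)) (a' + τ * (a + c') + τ ^ 2 * c) (s ^ 2 * c)
        (s * (c' + τ * c)) = cpCirc i := by
  obtain ⟨hcac, hcac'⟩ := hc.a04Table_mul_eq_zero h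
  rcases ne_or_eq c 0 with hc₀ | rfl
  · obtain rfl := sub_eq_zero.mp ((mul_eq_zero_iff_left hc₀).mp hcac)
    obtain ⟨t, ht⟩ := IsAlgClosed.exists_eq_mul_self c⁻¹
    have ht₀ : t ≠ 0 := by
      rintro rfl
      simp [hc₀] at ht
    obtain ⟨τ, hτ⟩ := exists_quadratic_eq_zero (b := 2 * a) (c := a') hc₀
      (IsAlgClosed.exists_eq_mul_self _)
    refine ⟨t, ht₀, τ, .c15 (t * (a + τ * c)), rfl, ?_⟩
    rw [cpCirc_c15, a04Table_inj]
    refine ⟨⟨rfl, by linear_combination hτ⟩, ?_, rfl⟩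
    rw [pow_two, ← ht, inv_mul_cancel₀ hc₀]
  rcases eq_or_ne a 0 with rfl | ha
  · obtain rfl : c' = 0 := by simpa using hcac'
    exact ⟨1, one_ne_zero, 0, .c17 a', rfl, by simp [cpCirc_c17]⟩
  rcases mul_eq_zero.mp hcac' with rfl | hc'
  · exact ⟨a⁻¹, inv_ne_zero ha, -a' / a, .c14, rfl, by simp [cpCirc_c14, ha]⟩
  · obtain rfl := sub_eq_zero.mp hc'
    refine ⟨a⁻¹, inv_ne_zero ha, -a' / (2 * a), .c16, rfl, ?_⟩
    rw [cpCirc_c16, a04Table_inj]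
    refine ⟨⟨?_, ?_⟩, ?_, ?_⟩ <;> field

theorem exists_cpIdx_hasTable (hdim : Module.finrank ℂ C = 2) (hm : IsCommAssoc mul)
    (hc : IsPreLie circ) (hder : ∀ x, IsDerivation mul (circ x)) (hne : ∃ x y, mul x y ≠ 0) :
    ∃ (i : CPIdx) (b : Module.Basis (Fin 2) ℂ C),
      HasTable mul b (cpMul i) ∧ HasTable circ b (cpCirc i) := by
  obtain ⟨b, k, hb⟩ := hm.exists_hasTable hdim hne
  match k with
  | .a01 =>
    refine ⟨.c09, b, hb, fun i j => ?_⟩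
    rw [(hder (b i)).eq_zero_of_a01 hm hb]
    fin_cases i <;> fin_cases j <;> simp [cpCirc, tbl]
  | .a02 =>
    rw [caAlg_a02] at hb
    obtain ⟨b', hb', ⟨α, h⟩ | h⟩ := exists_hasTable_peirceTable_weightTable hm hc hder hb
    · exact ⟨.c10 α, b', hb', cpCirc_c10 α ▸ h⟩
    · exact ⟨.c11, b', hb', cpCirc_c11 ▸ h⟩
  | .a03 =>
    rw [caAlg_a03] at hb
    obtain ⟨b', hb', h⟩ := exists_hasTable_peirceTable_weightTable hm hc hder hb
    rw [← caAlg_a03] at hb'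
    obtain ⟨α, h⟩ | h := h
    · exact ⟨.c12 α, b', hb', cpCirc_c12 α ▸ h⟩
    · exact ⟨.c13, b', hb', cpCirc_c13 ▸ h⟩
  | .a04 =>
    obtain ⟨a, a', c, c', h⟩ := exists_hasTable_a04Table hder hb
    obtain ⟨s, hs, τ, i, hi, hshear⟩ := exists_shear_a04Table hc h
    obtain ⟨b', h₀, h₁⟩ := exists_basis_shear b hs (pow_ne_zero 2 hs) τ
    refine ⟨i, b', ?_, hshear ▸ h.a04Table_shear h₀ h₁⟩
    rw [cpMul_eq_caAlg, hi]
    exact hb.a04_shear h₀ h₁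

theorem iso2_c15_neg (α : ℂ) :
    Iso2 (tm (cpMul (.c15 α))) (tm (cpCirc (.c15 α)))
      (tm (cpMul (.c15 (-α)))) (tm (cpCirc (.c15 (-α)))) := by
  obtain ⟨b, h₀, h₁⟩ := exists_basis_shear (Pi.basisFun ℂ (Fin 2)) (s := -1) (r := (-1) ^ 2)
    (by simp) (by simp) 0
  refine iso2_tm_iff_exists_hasTable.mpr ⟨b, (hasTable_tmBilin cA04).a04_shear h₀ h₁, ?_⟩
  rw [cpCirc_c15, cpCirc_c15]
  simpa using (hasTable_tmBilin (a04Table α 0 1 α)).a04Table_shear h₀ h₁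

end Classification

section Rigidity

variable {C : Type*} [AddCommGroup C] [Module ℂ C] {mul circ : C →ₗ[ℂ] C →ₗ[ℂ] C}
  {b b' : Module.Basis (Fin 2) ℂ C} {k k' : CAIdx} {ε : ℂ}

theorem HasTable.exists_unit_iff (h : HasTable mul b (caAlg k)) :
    (∃ e, ∀ x, mul e x = x) ↔ k = .a01 ∨ k = .a02 := by
  match k with
  | .a01 =>
    obtain ⟨⟨h₀₀, h₀₁⟩, h₁₀, h₁₁⟩ := hasTable_a01_iff.mp h
    refine iff_of_true ⟨b 0 + b 1, fun x => ?_⟩ (.inl rfl)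
    obtain ⟨p, q, rfl⟩ := exists_eq_smul_add_smul b x
    simp [h₀₀, h₀₁, h₁₀, h₁₁]
  | .a02 =>
    obtain ⟨⟨h₀₀, h₀₁⟩, -⟩ := hasTable_a02_iff.mp h
    refine iff_of_true ⟨b 0, fun x => ?_⟩ (.inr rfl)
    obtain ⟨p, q, rfl⟩ := exists_eq_smul_add_smul b x
    simp [h₀₀, h₀₁]
  | .a03 =>
    obtain ⟨⟨-, h₀₁⟩, -, h₁₁⟩ := hasTable_a03_iff.mp h
    refine iff_of_false (fun ⟨e, he⟩ => b.ne_zero 1 ?_) (by simp)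
    obtain ⟨p, q, rfl⟩ := exists_eq_smul_add_smul b e
    simpa [h₀₁, h₁₁] using (he (b 1)).symm
  | .a04 =>
    obtain ⟨⟨-, h₀₁⟩, -, h₁₁⟩ := hasTable_a04_iff.mp h
    refine iff_of_false (fun ⟨e, he⟩ => b.ne_zero 1 ?_) (by simp)
    obtain ⟨p, q, rfl⟩ := exists_eq_smul_add_smul b e
    simpa [h₀₁, h₁₁] using (he (b 1)).symm

theorem HasTable.eq_fst_of_idempotent (h : HasTable mul b (peirceTable ε)) (hε : 2 * ε ≠ 1)
    {e : C} (he₀ : e ≠ 0) (he : mul e e = e) : e = b 0 := by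
  obtain ⟨⟨h₀₀, h₀₁⟩, h₁₀, h₁₁⟩ := hasTable_peirceTable_iff.mp h
  obtain ⟨p, q, rfl⟩ := exists_eq_smul_add_smul b e
  have hpq : p * p = p ∧ 2 * ε * (p * q) = q := by
    refine (linearIndependent_basis_pair b).eq_of_pair (Eq.trans ?_ he)
    simp only [map_add, map_smul, LinearMap.add_apply, LinearMap.smul_apply, h₀₀, h₀₁, h₁₀, h₁₁]
    module
  obtain ⟨hp, hq⟩ := hpq
  rcases IsIdempotentElem.iff_eq_zero_or_one.mp hp with rfl | rfl
  · simp_all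
  · obtain rfl : q = 0 := by
      refine (mul_eq_zero.mp ?_).resolve_left (sub_ne_zero.mpr hε)
      linear_combination hq
    simp

theorem HasTable.exists_eq_smul_snd_of_mul_self_eq_zero (h : HasTable mul b (peirceTable ε))
    {y : C} (hy : mul y y = 0) : ∃ s : ℂ, y = s • b 1 := by
  obtain ⟨⟨h₀₀, h₀₁⟩, h₁₀, h₁₁⟩ := hasTable_peirceTable_iff.mp h
  obtain ⟨p, q, rfl⟩ := exists_eq_smul_add_smul b y
  have hpq : (p * p) • b 0 + (2 * ε * (p * q)) • b 1 = 0 := by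
    rw [← hy]
    simp only [map_add, map_smul, LinearMap.add_apply, LinearMap.smul_apply, h₀₀, h₀₁, h₁₀, h₁₁]
    module
  have hp := mul_self_eq_zero.mp ((linearIndependent_basis_pair b).eq_zero_of_pair hpq).1
  exact ⟨q, by rw [hp, zero_smul, zero_add]⟩

theorem HasTable.mul_mul_self_eq_zero_of_a04 (h : HasTable mul b (caAlg .a04)) (x : C) :
    mul (mul x x) x = 0 := by
  obtain ⟨⟨h₀₀, h₀₁⟩, h₁₀, h₁₁⟩ := hasTable_a04_iff.mp h
  obtain ⟨p, q, rfl⟩ := exists_eq_smul_add_smul b x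
  simp [h₀₀, h₀₁, h₁₀, h₁₁]

theorem HasTable.exists_annihilating_idempotent_iff (h : HasTable mul b (caAlg k)) :
    (∃ e ≠ 0, mul e e = e ∧ ∃ y ≠ 0, mul e y = 0) ↔ k = .a01 ∨ k = .a03 := by
  match k with
  | .a01 =>
    obtain ⟨⟨h₀₀, h₀₁⟩, -⟩ := hasTable_a01_iff.mp h
    exact iff_of_true ⟨b 0, b.ne_zero 0, h₀₀, b 1, b.ne_zero 1, h₀₁⟩ (.inl rfl)
  | .a03 =>
    obtain ⟨⟨h₀₀, h₀₁⟩, -⟩ := hasTable_a03_iff.mp h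
    exact iff_of_true ⟨b 0, b.ne_zero 0, h₀₀, b 1, b.ne_zero 1, h₀₁⟩ (.inr rfl)
  | .a02 =>
    refine iff_of_false ?_ (by simp)
    rintro ⟨e, he₀, he, y, hy₀, hey⟩
    obtain ⟨⟨h₀₀, h₀₁⟩, -⟩ := hasTable_a02_iff.mp h
    obtain rfl := (caAlg_a02 ▸ h).eq_fst_of_idempotent (by norm_num) he₀ he
    obtain ⟨p, q, rfl⟩ := exists_eq_smul_add_smul b y
    exact hy₀ (by simpa [h₀₀, h₀₁] using hey)
  | .a04 =>
    refine iff_of_false ?_ (by simp)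
    rintro ⟨e, he₀, he, -⟩
    exact he₀ (by rw [← h.mul_mul_self_eq_zero_of_a04 e, he, he])

theorem HasTable.caIdx_unique (h : HasTable mul b (caAlg k)) (h' : HasTable mul b' (caAlg k')) :
    k = k' := by
  have hunit := h.exists_unit_iff.symm.trans h'.exists_unit_iff
  have hidem := h.exists_annihilating_idempotent_iff.symm.trans
    h'.exists_annihilating_idempotent_iff
  cases k <;> cases k' <;> simp_all

theorem exists_rescale_of_peirceTable (hε : 2 * ε ≠ 1) (h : HasTable mul b (peirceTable ε))
    (h' : HasTable mul b' (peirceTable ε)) : ∃ s : ℂ, s ≠ 0 ∧ b' 0 = b 0 ∧ b' 1 = s • b 1 := by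
  obtain ⟨⟨h₀₀, -⟩, -, h₁₁⟩ := hasTable_peirceTable_iff.mp h'
  obtain ⟨s, hs⟩ := h.exists_eq_smul_snd_of_mul_self_eq_zero h₁₁
  refine ⟨s, ?_, h.eq_fst_of_idempotent hε (b'.ne_zero 0) h₀₀, hs⟩
  rintro rfl
  exact b'.ne_zero 1 (by rw [hs, zero_smul])

theorem exists_shear_of_a04 (h : HasTable mul b (caAlg .a04))
    (h' : HasTable mul b' (caAlg .a04)) :
    ∃ s τ : ℂ, s ≠ 0 ∧ b' 0 = s • (b 0 + τ • b 1) ∧ b' 1 = s ^ 2 • b 1 := by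
  obtain ⟨⟨h₀₀, h₀₁⟩, h₁₀, h₁₁⟩ := hasTable_a04_iff.mp h
  obtain ⟨p, q, hpq⟩ := exists_eq_smul_add_smul b (b' 0)
  have hsq : b' 1 = p ^ 2 • b 1 := by
    rw [← (hasTable_a04_iff.mp h').1.1, hpq]
    simp [h₀₀, h₀₁, h₁₀, h₁₁, smul_smul, pow_two]
  have hp : p ≠ 0 := by
    rintro rfl
    exact b'.ne_zero 1 (by simp [hsq])
  exact ⟨p, q / p, hp, by rw [hpq, smul_add, smul_smul, mul_div_cancel₀ _ hp], hsq⟩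

theorem weights_of_peirceTable (hε : 2 * ε ≠ 1) {α β α' β' : ℂ}
    (h : HasTable mul b (peirceTable ε)) (hc : HasTable circ b (weightTable α β))
    (h' : HasTable mul b' (peirceTable ε)) (hc' : HasTable circ b' (weightTable α' β')) :
    α = α' ∧ ∃ s ≠ 0, s * β = β' := by
  obtain ⟨s, hs, h₀, h₁⟩ := exists_rescale_of_peirceTable hε h h'
  have heq := weightTable_inj.mp ((hc.weightTable_rescale h₀ h₁).unique hc')
  exact ⟨heq.1, s, hs, heq.2⟩

theorem CPIdx.cpCirc_of_ca_a02 {i : CPIdx} (hi : i.ca = .a02) :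
    ∃ α β, cpCirc i = weightTable α β ∧ (i = .c10 α ∧ β = 0 ∨ i = .c11 ∧ α = 0 ∧ β = 1) := by
  cases i <;> cases hi
  · exact ⟨_, _, cpCirc_c10 _, .inl ⟨rfl, rfl⟩⟩
  · exact ⟨_, _, cpCirc_c11, .inr ⟨rfl, rfl, rfl⟩⟩

theorem CPIdx.cpCirc_of_ca_a03 {i : CPIdx} (hi : i.ca = .a03) :
    ∃ α β, cpCirc i = weightTable α β ∧ (i = .c12 α ∧ β = 0 ∨ i = .c13 ∧ α = 0 ∧ β = 1) := by
  cases i <;> cases hi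
  · exact ⟨_, _, cpCirc_c12 _, .inl ⟨rfl, rfl⟩⟩
  · exact ⟨_, _, cpCirc_c13, .inr ⟨rfl, rfl, rfl⟩⟩

theorem CPIdx.cpCirc_of_ca_a04 {i : CPIdx} (hi : i.ca = .a04) :
    ∃ a a' c c', cpCirc i = a04Table a a' c c' ∧
      ((i = .c14 ∧ a = 1 ∧ a' = 0 ∧ c = 0 ∧ c' = 0) ∨
        (i = .c15 a ∧ a' = 0 ∧ c = 1 ∧ c' = a) ∨
        (i = .c16 ∧ a = 1 ∧ a' = 0 ∧ c = 0 ∧ c' = 1) ∨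
        (i = .c17 a' ∧ a = 0 ∧ c = 0 ∧ c' = 0)) := by
  cases i <;> cases hi
  · exact ⟨_, _, _, _, cpCirc_c14, by simp⟩
  · exact ⟨_, _, _, _, cpCirc_c15 _, by simp⟩
  · exact ⟨_, _, _, _, cpCirc_c16, by simp⟩
  · exact ⟨_, _, _, _, cpCirc_c17 _, by simp⟩

theorem eq_of_ca_a02 {i j : CPIdx} (hi : i.ca = .a02) (hj : j.ca = .a02)
    (hm : HasTable mul b (caAlg .a02)) (hc : HasTable circ b (cpCirc i))
    (hm' : HasTable mul b' (caAlg .a02)) (hc' : HasTable circ b' (cpCirc j)) : i = j := by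
  obtain ⟨α, β, hαβ, hi⟩ := i.cpCirc_of_ca_a02 hi
  obtain ⟨α', β', hαβ', hj⟩ := j.cpCirc_of_ca_a02 hj
  rw [hαβ] at hc
  rw [hαβ'] at hc'
  obtain ⟨rfl, s, hs, rfl⟩ := weights_of_peirceTable (by norm_num) hm hc hm' hc'
  grind

theorem eq_of_ca_a03 {i j : CPIdx} (hi : i.ca = .a03) (hj : j.ca = .a03)
    (hm : HasTable mul b (caAlg .a03)) (hc : HasTable circ b (cpCirc i))
    (hm' : HasTable mul b' (caAlg .a03)) (hc' : HasTable circ b' (cpCirc j)) : i = j := by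
  obtain ⟨α, β, hαβ, hi⟩ := i.cpCirc_of_ca_a03 hi
  obtain ⟨α', β', hαβ', hj⟩ := j.cpCirc_of_ca_a03 hj
  rw [hαβ] at hc
  rw [hαβ'] at hc'
  rw [caAlg_a03] at hm hm'
  obtain ⟨rfl, s, hs, rfl⟩ := weights_of_peirceTable (by norm_num) hm hc hm' hc'
  grind

theorem eq_or_eq_c15_neg_of_ca_a04 {i j : CPIdx} (hi : i.ca = .a04) (hj : j.ca = .a04)
    (hm : HasTable mul b (caAlg .a04)) (hc : HasTable circ b (cpCirc i))
    (hm' : HasTable mul b' (caAlg .a04)) (hc' : HasTable circ b' (cpCirc j)) :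
    i = j ∨ ∃ α : ℂ, i = .c15 α ∧ j = .c15 (-α) := by
  obtain ⟨a, a', c, c', hac, hi⟩ := i.cpCirc_of_ca_a04 hi
  obtain ⟨d, d', e, e', hde, hj⟩ := j.cpCirc_of_ca_a04 hj
  rw [hac] at hc
  rw [hde] at hc'
  obtain ⟨s, τ, hs, h₀, h₁⟩ := exists_shear_of_a04 hm hm'
  obtain ⟨⟨rfl, rfl⟩, rfl, rfl⟩ := a04Table_inj.mp ((hc.a04Table_shear h₀ h₁).unique hc')
  rcases hi with hi | ⟨rfl, rfl, rfl, rfl⟩ | hi | hi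
  · left; grind
  · rcases hj with hj | ⟨rfl, hτ, hs₂, -⟩ | hj | hj
    · grind
    · -- Here `s = ±1` and `τ` is `0` or `-2 * c'`, so that `s * (c' + τ)` is `c'` or `-c'`.
      have hsq : (s * (c' + τ * 1)) ^ 2 = c' ^ 2 := by
        linear_combination (c' + τ) ^ 2 * hs₂ + hτ
      rcases sq_eq_sq_iff_eq_or_eq_neg.mp hsq with h | h
      · exact .inl (by rw [h])
      · exact .inr ⟨c', rfl, by rw [h]⟩
    · grind
    · grind
  · left; grind
  · left; grind

theorem eq_or_eq_c15_neg_of_iso2 {i j : CPIdx}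
    (h : Iso2 (tm (cpMul i)) (tm (cpCirc i)) (tm (cpMul j)) (tm (cpCirc j))) :
    i = j ∨ ∃ α : ℂ, i = .c15 α ∧ j = .c15 (-α) := by
  obtain ⟨b', hm', hc'⟩ := iso2_tm_iff_exists_hasTable.mp h
  have hm := hasTable_tmBilin (cpMul i)
  have hc := hasTable_tmBilin (cpCirc i)
  generalize tmBilin (cpCirc i) = circ, tmBilin (cpMul i) = mul at hm hc hm' hc'
  rw [cpMul_eq_caAlg] at hm hm'
  have hij : i.ca = j.ca := hm.caIdx_unique hm'
  rcases hi : i.ca <;> rw [← hij, hi] at hm' <;> rw [hi] at hm hij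
  · cases i <;> cases hi
    cases j <;> cases hij
    exact .inl rfl
  · exact .inl (eq_of_ca_a02 hi hij.symm hm hc hm' hc')
  · exact .inl (eq_of_ca_a03 hi hij.symm hm hc hm' hc')
  · exact eq_or_eq_c15_neg_of_ca_a04 hi hij.symm hm hc hm' hc'

end Rigidity

section PreLie

variable {C : Type*} [AddCommGroup C] [Module ℂ C] {circ : C →ₗ[ℂ] C →ₗ[ℂ] C}
  {b b' : Module.Basis (Fin 2) ℂ C}

theorem exists_plAlg_eq_caAlg (k : CAIdx) : ∃ i, plAlg i = caAlg k := by
  match k with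
  | .a01 => exact ⟨.c07, rfl⟩
  | .a02 => exact ⟨.c06 1, rfl⟩
  | .a03 => exact ⟨.c05 0, by simp [plAlg, caAlg, cA03, ← Matrix.zero_empty]⟩
  | .a04 => exact ⟨.c03, rfl⟩

/-- The multiplications for which `e₂` spans a two-sided ideal of square zero:
`e₁∘e₁ = a e₁ + a' e₂`, `e₁∘e₂ = p e₂`, `e₂∘e₁ = q e₂`. -/
def idealTable (a a' p q : ℂ) : Fin 2 → Fin 2 → V2 := tbl ![a, a'] ![0, p] ![0, q] 0

theorem hasTable_idealTable_iff {a a' p q : ℂ} : HasTable circ b (idealTable a a' p q) ↔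
    (circ (b 0) (b 0) = a • b 0 + a' • b 1 ∧ circ (b 0) (b 1) = p • b 1) ∧
      (circ (b 1) (b 0) = q • b 1 ∧ circ (b 1) (b 1) = 0) := by
  simp [idealTable, hasTable_tbl_iff]

theorem plAlg_c01 : plAlg .c01 = idealTable 1 1 0 1 := by
  simp [plAlg, idealTable, ← Matrix.zero_empty]

theorem plAlg_c02 : plAlg .c02 = idealTable 1 1 1 0 := by
  simp [plAlg, idealTable, ← Matrix.zero_empty]

theorem plAlg_c05 (α : ℂ) : plAlg (.c05 α) = idealTable 1 0 α 0 := by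
  simp [plAlg, idealTable, ← Matrix.zero_empty]

theorem plAlg_c06 (α : ℂ) : plAlg (.c06 α) = idealTable 1 0 α 1 := rfl

theorem HasTable.idealTable_shear {a a' p q s r τ : ℂ} (h : HasTable circ b (idealTable a a' p q))
    (hr : r ≠ 0) (h₀ : b' 0 = s • (b 0 + τ • b 1)) (h₁ : b' 1 = r • b 1) :
    HasTable circ b'
      (idealTable (s * a) (s ^ 2 / r * (a' + τ * (p + q - a))) (s * p) (s * q)) := by
  rw [hasTable_idealTable_iff] at h ⊢
  obtain ⟨⟨h₀₀, h₀₁⟩, h₁₀, h₁₁⟩ := h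
  simp only [h₀, h₁, map_add, map_smul, LinearMap.add_apply, LinearMap.smul_apply,
    h₀₀, h₀₁, h₁₀, h₁₁]
  refine ⟨⟨?_, ?_⟩, ?_, ?_⟩ <;> match_scalars <;> field

theorem HasTable.exists_idealTable_one {a a' p q : ℂ} (h : HasTable circ b (idealTable a a' p q))
    (ha : a ≠ 0) :
    ∃ b', HasTable circ b' (idealTable 1 0 (p / a) (q / a)) ∨
      p + q = a ∧ HasTable circ b' (idealTable 1 1 (p / a) (q / a)) := by
  have hs := inv_ne_zero ha
  obtain ⟨τ, hτ⟩ | ⟨hpq, ha'⟩ : (∃ τ, a' + τ * (p + q - a) = 0) ∨ (p + q = a ∧ a' ≠ 0) := by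
    by_cases hpq : p + q - a = 0
    · by_cases ha' : a' = 0
      · exact .inl ⟨0, by simp [ha']⟩
      · exact .inr ⟨sub_eq_zero.mp hpq, ha'⟩
    · exact .inl ⟨-a' / (p + q - a), by field⟩
  · obtain ⟨b', h₀, h₁⟩ := exists_basis_shear b hs one_ne_zero τ
    refine ⟨b', .inl ?_⟩
    simpa [hτ, ha, div_eq_inv_mul] using h.idealTable_shear one_ne_zero h₀ h₁
  · have hr : a⁻¹ ^ 2 * a' ≠ 0 := mul_ne_zero (pow_ne_zero 2 hs) ha'
    obtain ⟨b', h₀, h₁⟩ := exists_basis_shear b hs hr 0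
    refine ⟨b', .inr ⟨hpq, ?_⟩⟩
    convert h.idealTable_shear hr h₀ h₁ using 2 <;> field

theorem HasTable.exists_hasTable_plAlg_of_idealTable {a a' c : ℂ}
    (h : HasTable circ b (idealTable a a' (c + 1) c)) (hca : c * (c - a) = 0) :
    ∃ i b', HasTable circ b' (plAlg i) := by
  rcases eq_or_ne a 0 with rfl | ha
  · obtain rfl : c = 0 := by simpa using hca
    obtain ⟨⟨h₀₀, h₀₁⟩, h₁₀, h₁₁⟩ := hasTable_idealTable_iff.mp h
    obtain ⟨b', h₀, h₁⟩ := exists_basis_of_det_ne_zero b (p := 0) (q := 1) (r := 1) (s := -a')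
      (by simp)
    refine ⟨.c04, b', hasTable_tbl_iff.mpr ?_⟩
    simp [h₀, h₁, h₀₀, h₀₁, h₁₀, h₁₁]
  obtain ⟨b', hone | ⟨hca₁, hone⟩⟩ := h.exists_idealTable_one ha
  · rcases mul_eq_zero.mp hca with rfl | hc
    · exact ⟨.c05 ((0 + 1) / a), b', by simpa only [plAlg_c05, zero_div] using hone⟩
    · obtain rfl := sub_eq_zero.mp hc
      exact ⟨.c06 ((c + 1) / c), b', by simpa only [plAlg_c06, div_self ha] using hone⟩
  · rcases mul_eq_zero.mp hca with rfl | hc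
    · obtain rfl : a = 1 := by linear_combination -hca₁
      exact ⟨.c02, b', by simpa [plAlg_c02] using hone⟩
    · obtain rfl := sub_eq_zero.mp hc
      obtain rfl : c = -1 := by linear_combination hca₁
      exact ⟨.c01, b', by simpa [plAlg_c01] using hone⟩

/-- The general multiplication with `e₁∘e₂ - e₂∘e₁ = e₂`. -/
def commutatorTable (a a' k c d f : ℂ) : Fin 2 → Fin 2 → V2 :=
  tbl ![a, a'] ![k, c + 1] ![k, c] ![d, f]

theorem hasTable_commutatorTable_iff {a a' k c d f : ℂ} :
    HasTable circ b (commutatorTable a a' k c d f) ↔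
    (circ (b 0) (b 0) = a • b 0 + a' • b 1 ∧ circ (b 0) (b 1) = k • b 0 + (c + 1) • b 1) ∧
      (circ (b 1) (b 0) = k • b 0 + c • b 1 ∧ circ (b 1) (b 1) = d • b 0 + f • b 1) := by
  simp [commutatorTable, hasTable_tbl_iff]

theorem exists_hasTable_commutatorTable {d f : ℂ}
    (hcomm : circ (b 0) (b 1) - circ (b 1) (b 0) = b 1)
    (h₁₁ : circ (b 1) (b 1) = d • b 0 + f • b 1) :
    ∃ a a' k c, HasTable circ b (commutatorTable a a' k c d f) := by
  obtain ⟨a, a', h₀₀⟩ := exists_eq_smul_add_smul b (circ (b 0) (b 0))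
  obtain ⟨k, c, h₁₀⟩ := exists_eq_smul_add_smul b (circ (b 1) (b 0))
  refine ⟨a, a', k, c, hasTable_commutatorTable_iff.mpr ⟨⟨h₀₀, ?_⟩, h₁₀, h₁₁⟩⟩
  rw [sub_eq_iff_eq_add.mp hcomm, h₁₀]
  module

theorem IsPreLie.commutatorTable_relations {a a' k c d f : ℂ} (hc : IsPreLie circ)
    (h : HasTable circ b (commutatorTable a a' k c d f)) :
    (d * a' - k * c = f ∧ d * (a - c - 2) + f * k = k ^ 2) ∧
      (k + d * a' = k * c ∧ k * a' + c * (c - a) = a' * f) := by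
  obtain ⟨⟨h₀₀, h₀₁⟩, h₁₀, h₁₁⟩ := hasTable_commutatorTable_iff.mp h
  have hind := linearIndependent_basis_pair b
  have hpre₀ := hc (b 0) (b 1) (b 0)
  have hpre₁ := hc (b 0) (b 1) (b 1)
  simp only [h₀₀, h₀₁, h₁₀, h₁₁, map_add, map_smul, LinearMap.add_apply,
    LinearMap.smul_apply] at hpre₀ hpre₁
  rw [← sub_eq_zero] at hpre₀ hpre₁
  have hcoef₀ : (k + d * a' - k * c) • b 0 + (a' * f - k * a' - c * (c - a)) • b 1 = 0 := by
    rw [← hpre₀]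
    module
  have hcoef₁ : (k ^ 2 - f * k - d * (a - c - 2)) • b 0 + (f - (d * a' - k * c)) • b 1 = 0 := by
    rw [← hpre₁]
    module
  obtain ⟨h₁, h₂⟩ := hind.eq_zero_of_pair hcoef₀
  obtain ⟨h₃, h₄⟩ := hind.eq_zero_of_pair hcoef₁
  refine ⟨⟨?_, ?_⟩, ?_, ?_⟩
  · linear_combination -h₄
  · linear_combination -h₃
  · linear_combination h₁
  · linear_combination -h₂

theorem exists_hasTable_c08 {d : ℂ} (hd : d ≠ 0)
    (h : HasTable circ b (commutatorTable 2 0 0 0 d 0)) : ∃ b', HasTable circ b' (plAlg .c08) := by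
  obtain ⟨⟨h₀₀, h₀₁⟩, h₁₀, h₁₁⟩ := hasTable_commutatorTable_iff.mp h
  obtain ⟨k, hk⟩ := IsAlgClosed.exists_eq_mul_self (-d⁻¹)
  have hkd : k * k * d = -1 := by rw [← hk]; simp [hd]
  have hk₀ : k ≠ 0 := by
    rintro rfl
    simp at hkd
  obtain ⟨b', h₀, h₁⟩ := exists_basis_of_det_ne_zero b (p := 1) (q := -k) (r := 1 / 2) (s := 0)
    (by simp [hk₀, eq_comm])
  refine ⟨b', hasTable_tbl_iff.mpr ⟨⟨?_, ?_⟩, ?_, ?_⟩⟩ <;>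
    simp only [h₀, h₁, map_add, map_smul, LinearMap.add_apply, LinearMap.smul_apply, h₀₀, h₀₁,
      h₁₀, h₁₁, Matrix.cons_val]
  · match_scalars
    · linear_combination hkd
    · ring
  all_goals module

theorem IsPreLie.exists_hasTable_c08_of_commutator {d f : ℂ} (hc : IsPreLie circ)
    (hcomm : circ (b 0) (b 1) - circ (b 1) (b 0) = b 1)
    (h₁₁ : circ (b 1) (b 1) = d • b 0 + f • b 1) (hd : d ≠ 0) :
    ∃ b', HasTable circ b' (plAlg .c08) := by
  obtain ⟨b', h₀, h₁⟩ := exists_basis_shear b one_ne_zero one_ne_zero (f / d)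
  obtain ⟨a, a', k, c, h⟩ : ∃ a a' k c, HasTable circ b' (commutatorTable a a' k c d 0) := by
    apply exists_hasTable_commutatorTable
    · simpa [h₀, h₁] using hcomm
    · simp only [h₀, h₁, one_smul, h₁₁]
      match_scalars <;> field
  obtain ⟨⟨ha', hac⟩, hk, hcc⟩ := hc.commutatorTable_relations h
  obtain rfl : k = 0 := by linear_combination hk - ha'
  obtain rfl : a' = 0 := by simpa [hd] using ha'
  obtain rfl : a = c + 2 := by
    refine sub_eq_zero.mp ((mul_eq_zero.mp ?_).resolve_left hd)
    linear_combination hac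
  obtain rfl : c = 0 := by linear_combination -hcc / 2
  exact exists_hasTable_c08 hd (by simpa using h)

theorem IsPreLie.exists_hasTable_plAlg_of_commutator (hc : IsPreLie circ)
    (hcomm : circ (b 0) (b 1) - circ (b 1) (b 0) = b 1) : ∃ i b', HasTable circ b' (plAlg i) := by
  obtain ⟨d, f, h₁₁⟩ := exists_eq_smul_add_smul b (circ (b 1) (b 1))
  rcases ne_or_eq d 0 with hd | rfl
  · exact ⟨.c08, hc.exists_hasTable_c08_of_commutator hcomm h₁₁ hd⟩
  obtain ⟨a, a', k, c, h⟩ := exists_hasTable_commutatorTable hcomm h₁₁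
  obtain ⟨⟨hf, hfk⟩, hk, hcc⟩ := hc.commutatorTable_relations h
  obtain rfl : k = 0 := by
    refine (pow_eq_zero_iff two_ne_zero).mp ?_
    linear_combination (-k * hf - hfk + k * hk) / 2
  obtain rfl : f = 0 := by linear_combination -hf
  have hideal : HasTable circ b (idealTable a a' (c + 1) c) := by
    simpa [commutatorTable, idealTable, ← Matrix.zero_empty] using h
  exact hideal.exists_hasTable_plAlg_of_idealTable (by linear_combination hcc)

theorem exists_plIdx_hasTable (hdim : Module.finrank ℂ C = 2) (hc : IsPreLie circ)
    (hne : ∃ x y, circ x y ≠ 0) :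
    ∃ (i : PLIdx) (b : Module.Basis (Fin 2) ℂ C), HasTable circ b (plAlg i) := by
  by_cases hcomm : ∀ x y, circ x y = circ y x
  · obtain ⟨b, k, hb⟩ := (hc.isCommAssoc hcomm).exists_hasTable hdim hne
    obtain ⟨i, hi⟩ := exists_plAlg_eq_caAlg k
    exact ⟨i, b, hi ▸ hb⟩
  · have halt : (circ - circ.flip).IsAlt := fun x => by simp
    obtain ⟨b, hb⟩ := exists_basis_apply_eq_snd_of_isAlt halt hdim
      (by simpa [sub_eq_zero] using hcomm)
    exact hc.exists_hasTable_plAlg_of_commutator (b := b) (by simpa using hb)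

end PreLie

/-- Every nonzero 2-dimensional commutative pre-Lie algebra over ℂ is
isomorphic to one of the pre-Lie algebras C01–C08 (with `· ≡ 0`) or to one of C09–C17;
moreover among C09–C17 the only nontrivial isomorphism is `C15^α ≅ C15^{-α}`. -/
theorem statement14 (C : Type*) [AddCommGroup C] [Module ℂ C]
    (hdim : Module.finrank ℂ C = 2)
    (mul circ : C →ₗ[ℂ] C →ₗ[ℂ] C)
    (hcomm : ∀ x y : C, mul x y = mul y x)
    (hassoc : ∀ x y z : C, mul (mul x y) z = mul x (mul y z))
    (hpre : ∀ x y z : C, circ (circ x y) z - circ (circ y x) z =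
      circ x (circ y z) - circ y (circ x z))
    (hcompat : ∀ x y z : C, circ x (mul y z) = mul (circ x y) z + mul y (circ x z))
    (hnz : (∃ x y : C, mul x y ≠ 0) ∨ (∃ x y : C, circ x y ≠ 0)) :
    ((∃ i : PLIdx, Iso2 (fun x y => mul x y) (fun x y => circ x y)
        zm (tm (plAlg i))) ∨
     (∃ i : CPIdx, Iso2 (fun x y => mul x y) (fun x y => circ x y)
        (tm (cpMul i)) (tm (cpCirc i)))) ∧
    (∀ α : ℂ, Iso2 (tm (cpMul (.c15 α))) (tm (cpCirc (.c15 α)))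
        (tm (cpMul (.c15 (-α)))) (tm (cpCirc (.c15 (-α))))) ∧
    (∀ i j : CPIdx, Iso2 (tm (cpMul i)) (tm (cpCirc i)) (tm (cpMul j)) (tm (cpCirc j)) →
        i = j ∨ ∃ α : ℂ, i = .c15 α ∧ j = .c15 (-α)) := by
  have hm : IsCommAssoc mul := ⟨hcomm, hassoc⟩
  refine ⟨?_, iso2_c15_neg, fun i j => eq_or_eq_c15_neg_of_iso2⟩
  by_cases hmul : ∃ x y, mul x y ≠ 0
  · obtain ⟨i, b, hb⟩ := exists_cpIdx_hasTable hdim hm hpre hcompat hmul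
    exact .inr ⟨i, iso2_iff_exists_hasTable.mpr ⟨b, hb⟩⟩
  · obtain ⟨i, b, hb⟩ := exists_plIdx_hasTable hdim hpre (hnz.resolve_left hmul)
    push Not at hmul
    exact .inl ⟨i, iso2_zm_of_hasTable hmul hb⟩
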